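/- Let T: Lip(X) → Lip(Y) be a bijective linear separating map between spaces of bounded scalar-valued Lipschitz functions, and suppose Y is compact. Then there exist a bi-Lipschitz homeomorphism h: Y → X and a function τ ∈ Lip(Y) with τ(y) ≠ 0 for all y ∈ Y, such that (Tf)(y) = τ(y) · f(h(y)) for every f ∈ Lip(X) and every y ∈ Y. -/

import Mathlib

/-!
Each functional `f ↦ T f y` is disjointness preserving, so on a compact `X` it lives at a single
support point `h y`: it kills every function that vanishes near `h y`. That is not yet a weighted
evaluation, since a generalized derivative at `h y` has this property too, and no continuity of
`T` is assumed. Both this difficulty and the compactness of `X` are settled by one observation,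
`IsSepBij.oscillation`. Uniformly Lipschitz, disjointly supported functions `f n` can be summed over
any set of indices, and at a point `y n` with `T (f n) (y n) ≠ 0` the image of the sum equals
`T (f n) (y n)` or `0`, according to whether `n` was selected. If `y n` converges and
`T (f n) (y n)` tends to a nonzero limit, selecting the even indices produces a discontinuous image.

* `X` is compact (`IsSepBij.compactSpace`): otherwise it contains a uniformly separated sequence, and
  a preimage of the constant `1` can be cut off near each of its points.
* Let `goodSet` be the closed set of those `y` where `T f y = T 1 y * f (h y)` for all `f`. It is
  mapped by `h` onto `X` (`IsSepBij.exists_mem_goodSet`): if only bad points lie over `x₀`, then `x₀`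
  is not isolated, and for `f` witnessing that some point over `x₀` is bad one cuts off
  `f - f (x n)` on small disjoint balls about points `x n → x₀`. Cutting off at a zero does not
  spoil the Lipschitz constant (`norm_mul_plateau_sub_le`).
* Hence `T f = 0` on `goodSet` forces `f = 0`, and surjectivity of `T` gives `goodSet = Y`
  (`IsSepBij.goodSet_eq_univ`).

So `T f = τ * (f ∘ h)` with `τ = T 1`, and `h` is a bijection. Both `f ↦ f ∘ h` and `g ↦ g ∘ h⁻¹`
preserve Lipschitz functions, and by the uniform boundedness principle
(`exists_lipschitzWith_of_comp`) this makes `h` and `h⁻¹` Lipschitz.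
-/

open Metric Set Function Bornology
open scoped NNReal

/-- `f` is a bounded Lipschitz function. -/
def IsLip {X E : Type*} [PseudoMetricSpace X] [NormedAddCommGroup E] (f : X → E) : Prop :=
  (∃ K : ℝ≥0, LipschitzWith K f) ∧ ∃ C : ℝ, ∀ x, ‖f x‖ ≤ C

/-- The cozero set of `f`. -/
def coz {X E : Type*} [Zero E] (f : X → E) : Set X := {x | f x ≠ 0}

/-- The norm `‖f‖_L = max {‖f‖_∞, L(f)}` on bounded Lipschitz functions. -/
noncomputable def lipNorm {X E : Type*} [PseudoMetricSpace X] [NormedAddCommGroup E]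
    (f : X → E) : ℝ :=
  max (⨆ x, ‖f x‖) (⨆ p : X × X, ‖f p.1 - f p.2‖ / dist p.1 p.2)

/-- `T` is a linear biseparating map from `Lip(X,E)` onto `Lip(Y,F)`:
it maps bounded Lipschitz functions to bounded Lipschitz functions, is linear,
restricts to a bijection between the spaces of bounded Lipschitz functions, and
both `T` and its inverse are separating (disjointness preserving). -/
structure IsBisep (𝕂 : Type*) {X Y E F : Type*} [RCLike 𝕂]
    [PseudoMetricSpace X] [PseudoMetricSpace Y]
    [NormedAddCommGroup E] [NormedSpace 𝕂 E] [NormedAddCommGroup F] [NormedSpace 𝕂 F]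
    (T : (X → E) → (Y → F)) : Prop where
  maps_lip : ∀ f, IsLip f → IsLip (T f)
  map_add : ∀ f g, IsLip f → IsLip g → T (f + g) = T f + T g
  map_smul : ∀ (c : 𝕂) (f : X → E), IsLip f → T (c • f) = c • T f
  inj : ∀ f g, IsLip f → IsLip g → T f = T g → f = g
  surj : ∀ g, IsLip g → ∃ f, IsLip f ∧ T f = g
  sep : ∀ f g, IsLip f → IsLip g → coz f ∩ coz g = ∅ → coz (T f) ∩ coz (T g) = ∅
  sep_inv : ∀ f g, IsLip f → IsLip g → coz (T f) ∩ coz (T g) = ∅ → coz f ∩ coz g = ∅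

/-! ### Bounded Lipschitz functions -/

theorem isLip_of_norm_sub_le {X E : Type*} [PseudoMetricSpace X] [NormedAddCommGroup E] {f : X → E}
    {K C : ℝ} (hK : ∀ x y, ‖f x - f y‖ ≤ K * dist x y) (hC : ∀ x, ‖f x‖ ≤ C) : IsLip f :=
  ⟨⟨K.toNNReal, LipschitzWith.of_dist_le' fun x y => by rw [dist_eq_norm]; exact hK x y⟩, C, hC⟩

theorem IsLip.exists_bounds {X E : Type*} [PseudoMetricSpace X] [NormedAddCommGroup E] {f : X → E}
    (hf : IsLip f) : ∃ K C : ℝ, 0 ≤ K ∧ 0 ≤ C ∧ (∀ x y, ‖f x - f y‖ ≤ K * dist x y) ∧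
      ∀ x, ‖f x‖ ≤ C := by
  obtain ⟨⟨K, hK⟩, C, hC⟩ := hf
  refine ⟨K, max C 0, K.2, le_max_right _ _, fun x y => ?_, fun x => (hC x).trans (le_max_left _ _)⟩
  rw [← dist_eq_norm]; exact hK.dist_le_mul x y

theorem IsLip.continuous {X E : Type*} [PseudoMetricSpace X] [NormedAddCommGroup E] {f : X → E}
    (hf : IsLip f) : Continuous f := by
  obtain ⟨⟨K, hK⟩, -⟩ := hf
  exact hK.continuous

section Algebra

variable {𝕂 X : Type*} [RCLike 𝕂] [PseudoMetricSpace X]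

theorem isLip_const (c : 𝕂) : IsLip (fun _ : X => c) :=
  isLip_of_norm_sub_le (K := 0) (C := ‖c‖) (by simp) (by simp)

theorem IsLip.add {f g : X → 𝕂} (hf : IsLip f) (hg : IsLip g) : IsLip (f + g) := by
  obtain ⟨K, C, -, -, hK, hC⟩ := hf.exists_bounds
  obtain ⟨K', C', -, -, hK', hC'⟩ := hg.exists_bounds
  refine isLip_of_norm_sub_le (K := K + K') (C := C + C') (fun x y => ?_)
    fun x => (norm_add_le _ _).trans (add_le_add (hC x) (hC' x))
  calc ‖f x + g x - (f y + g y)‖ = ‖(f x - f y) + (g x - g y)‖ := by congr 1; ring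
    _ ≤ _ := norm_add_le _ _
    _ ≤ _ := by linarith [hK x y, hK' x y]

theorem IsLip.mul {f g : X → 𝕂} (hf : IsLip f) (hg : IsLip g) : IsLip (f * g) := by
  obtain ⟨K, C, hK0, hC0, hK, hC⟩ := hf.exists_bounds
  obtain ⟨K', C', hK0', hC0', hK', hC'⟩ := hg.exists_bounds
  refine isLip_of_norm_sub_le (K := C * K' + K * C') (C := C * C') (fun x y => ?_) fun x => ?_
  · calc ‖f x * g x - f y * g y‖ = ‖f x * (g x - g y) + (f x - f y) * g y‖ := by congr 1; ring
      _ ≤ ‖f x‖ * ‖g x - g y‖ + ‖f x - f y‖ * ‖g y‖ := by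
        rw [← norm_mul, ← norm_mul]; exact norm_add_le _ _
      _ ≤ C * (K' * dist x y) + (K * dist x y) * C' := by
        gcongr
        exacts [hC x, hK' x y, hK x y, hC' y]
      _ = _ := by ring
  · rw [Pi.mul_apply, norm_mul]
    exact mul_le_mul (hC x) (hC' x) (norm_nonneg _) hC0

theorem IsLip.smul {f : X → 𝕂} (hf : IsLip f) (c : 𝕂) : IsLip (c • f) :=
  (isLip_const c).mul hf

theorem IsLip.sub {f g : X → 𝕂} (hf : IsLip f) (hg : IsLip g) : IsLip (f - g) := by
  have := hf.add (hg.smul (-1))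
  rwa [neg_one_smul, ← sub_eq_add_neg] at this

theorem IsLip.inv [CompactSpace X] {f : X → 𝕂} (hf : IsLip f) (h0 : ∀ x, f x ≠ 0) :
    IsLip (fun x => (f x)⁻¹) := by
  have hc : Continuous fun x => (f x)⁻¹ := hf.continuous.inv₀ h0
  obtain ⟨C, hC⟩ := isCompact_univ.exists_bound_of_continuousOn hc.continuousOn
  obtain ⟨K, -, hK0, -, hK, -⟩ := hf.exists_bounds
  refine isLip_of_norm_sub_le (K := C * K * C) (C := C) (fun x y => ?_) fun x => hC x trivial
  have hx := hC x trivial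
  have hy := hC y trivial
  have hC0 : 0 ≤ C := (norm_nonneg _).trans hx
  rw [inv_sub_inv' (h0 x) (h0 y), norm_mul, norm_mul]
  calc _ ≤ C * (K * dist y x) * C := by gcongr; exact hK y x
    _ = _ := by rw [dist_comm y x]; ring

theorem IsLip.ofReal (𝕂 : Type*) [RCLike 𝕂] {f : X → ℝ} (hf : IsLip f) :
    IsLip fun x => ((f x : ℝ) : 𝕂) := by
  obtain ⟨K, C, -, -, hK, hC⟩ := hf.exists_bounds
  refine isLip_of_norm_sub_le (K := K) (C := C) (fun a b => ?_) fun a => ?_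
  · rw [← RCLike.ofReal_sub, RCLike.norm_ofReal]; exact hK a b
  · rw [RCLike.norm_ofReal]; exact hC a

end Algebra

/-! ### Plateau functions -/

/-- The plateau `max 0 (min 1 (2 - dist x c / r))`: equal to `1` on the closed ball of radius `r`
about `c`, to `0` off the open ball of radius `2 * r`, and `1 / r`-Lipschitz. -/
noncomputable def plateau (𝕂 : Type*) {X : Type*} [RCLike 𝕂] [PseudoMetricSpace X]
    (c : X) (r : ℝ) (x : X) : 𝕂 := ((max 0 (min 1 (2 - dist x c / r)) : ℝ) : 𝕂)

section Plateau

variable {𝕂 X : Type*} [RCLike 𝕂] [PseudoMetricSpace X]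

theorem plateau_eq_one {c : X} {r : ℝ} (hr : 0 < r) {x : X} (hx : dist x c ≤ r) :
    plateau 𝕂 c r x = 1 := by
  have : dist x c / r ≤ 1 := (div_le_one hr).2 hx
  rw [plateau, min_eq_left (by linarith), max_eq_right zero_le_one, RCLike.ofReal_one]

theorem plateau_eq_zero {c : X} {r : ℝ} (hr : 0 < r) {x : X} (hx : 2 * r ≤ dist x c) :
    plateau 𝕂 c r x = 0 := by
  have : 2 ≤ dist x c / r := (le_div_iff₀ hr).2 hx
  rw [plateau, max_eq_left ((min_le_right _ _).trans (by linarith)), RCLike.ofReal_zero]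

theorem norm_plateau_le (c : X) (r : ℝ) (x : X) : ‖plateau 𝕂 c r x‖ ≤ 1 := by
  rw [plateau, RCLike.norm_ofReal, abs_of_nonneg (le_max_left _ _)]
  exact max_le zero_le_one (min_le_left _ _)

theorem norm_plateau_sub_le (c : X) {r : ℝ} (hr : 0 < r) (x y : X) :
    ‖plateau 𝕂 c r x - plateau 𝕂 c r y‖ ≤ 1 / r * dist x y := by
  rw [plateau, plateau, ← RCLike.ofReal_sub, RCLike.norm_ofReal]
  refine (abs_max_sub_max_le_max _ _ _ _).trans ?_
  rw [sub_self, abs_zero, max_eq_right (abs_nonneg _)]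
  refine (abs_min_sub_min_le_max _ _ _ _).trans ?_
  rw [sub_self, abs_zero, max_eq_right (abs_nonneg _)]
  have : (2 - dist x c / r) - (2 - dist y c / r) = (dist y c - dist x c) / r := by ring
  rw [this, abs_div, abs_of_pos hr, div_eq_inv_mul, one_div]
  gcongr
  rw [dist_comm x y]
  exact abs_dist_sub_le _ _ _

theorem isLip_plateau (c : X) {r : ℝ} (hr : 0 < r) : IsLip (plateau 𝕂 c r) :=
  isLip_of_norm_sub_le (norm_plateau_sub_le c hr) (norm_plateau_le c r)

/-- Cutting off a Lipschitz function near one of its zeros `c` costs only a factor `3` in the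
Lipschitz constant, whatever the radius: on the ball where the plateau, of slope `1 / r`, lives,
the function is at most `2 * r * K`. -/
theorem norm_mul_plateau_sub_le {f : X → 𝕂} {K : ℝ} (hK0 : 0 ≤ K)
    (hK : ∀ x y, ‖f x - f y‖ ≤ K * dist x y) {c : X} (hc : f c = 0) {r : ℝ} (hr : 0 < r)
    (x y : X) :
    ‖f x * plateau 𝕂 c r x - f y * plateau 𝕂 c r y‖ ≤ 3 * K * dist x y := by
  have key : ∀ x y, dist x c ≤ 2 * r →
      ‖f x * plateau 𝕂 c r x - f y * plateau 𝕂 c r y‖ ≤ 3 * K * dist x y := by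
    intro x y hx
    have h1 : ‖f x‖ ≤ K * (2 * r) := by
      have := hK x c
      rw [hc, sub_zero] at this
      exact this.trans (by gcongr)
    calc _ = ‖f x * (plateau 𝕂 c r x - plateau 𝕂 c r y) + (f x - f y) * plateau 𝕂 c r y‖ := by
          congr 1; ring
      _ ≤ ‖f x‖ * ‖plateau 𝕂 c r x - plateau 𝕂 c r y‖ + ‖f x - f y‖ * ‖plateau 𝕂 c r y‖ := by
        rw [← norm_mul, ← norm_mul]; exact norm_add_le _ _
      _ ≤ K * (2 * r) * (1 / r * dist x y) + K * dist x y * 1 := by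
        gcongr
        exacts [norm_plateau_sub_le c hr x y, hK x y, norm_plateau_le c r y]
      _ = _ := by field_simp; ring
  rcases le_or_gt (dist x c) (2 * r) with hx | hx
  · exact key x y hx
  rcases le_or_gt (dist y c) (2 * r) with hy | hy
  · rw [norm_sub_rev, dist_comm]; exact key y x hy
  · rw [plateau_eq_zero hr hx.le, plateau_eq_zero hr hy.le]
    simp only [mul_zero, sub_zero, norm_zero]
    positivity

end Plateau

/-! ### Gluing disjointly supported functions -/

/-- Functions with pairwise disjoint cozero sets and common Lipschitz constant and bound can be
glued along any set `A` of indices: `F` is the pointwise sum over `A`. -/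
theorem exists_glue {𝕂 X ι : Type*} [RCLike 𝕂] [PseudoMetricSpace X] {f : ι → X → 𝕂} {K C : ℝ}
    (hK0 : 0 ≤ K) (hC0 : 0 ≤ C)
    (hK : ∀ n x y, ‖f n x - f n y‖ ≤ K * dist x y) (hC : ∀ n x, ‖f n x‖ ≤ C)
    (hdisj : ∀ m n x, m ≠ n → f m x ≠ 0 → f n x = 0) (A : Set ι) :
    ∃ F : X → 𝕂, IsLip F ∧ (∀ n ∈ A, ∀ x, f n x ≠ 0 → F x = f n x) ∧
      ∀ x, (∀ n ∈ A, f n x = 0) → F x = 0 := by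
  classical
  let F : X → 𝕂 := fun x => if h : ∃ n ∈ A, f n x ≠ 0 then f h.choose x else 0
  have h0 : ∀ x, (∀ n ∈ A, f n x = 0) → F x = 0 := by
    intro x hx
    exact dif_neg (by rintro ⟨n, hn, h⟩; exact h (hx n hn))
  have h1 : ∀ n ∈ A, ∀ x, f n x ≠ 0 → F x = f n x := by
    intro n hn x hx
    have h : ∃ n ∈ A, f n x ≠ 0 := ⟨n, hn, hx⟩
    have hF : F x = f h.choose x := dif_pos h
    rw [hF]
    by_contra hne
    exact hx (hdisj h.choose n x (fun e => hne (by rw [e])) h.choose_spec.2)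
  refine ⟨F, isLip_of_norm_sub_le (K := 2 * K) (C := C) ?_ ?_, h1, h0⟩
  · have one : ∀ x y, (∀ n ∈ A, f n y = 0) → ‖F x - F y‖ ≤ K * dist x y := by
      intro x y hy
      rw [h0 y hy]
      by_cases hx : ∀ n ∈ A, f n x = 0
      · rw [h0 x hx, sub_zero, norm_zero]; positivity
      · push Not at hx
        obtain ⟨n, hn, hx⟩ := hx
        have := hK n x y
        rwa [hy n hn, ← h1 n hn x hx] at this
    intro x y
    have hd : 0 ≤ K * dist x y := by positivity
    by_cases hy : ∀ n ∈ A, f n y = 0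
    · linarith [one x y hy]
    by_cases hx : ∀ n ∈ A, f n x = 0
    · rw [norm_sub_rev, dist_comm]
      rw [dist_comm] at hd
      linarith [one y x hx]
    push Not at hx hy
    obtain ⟨m, hm, hx⟩ := hx
    obtain ⟨n, hn, hy⟩ := hy
    rw [h1 m hm x hx, h1 n hn y hy]
    by_cases hmn : m = n
    · subst hmn; linarith [hK m x y]
    · have e1 := hK m x y
      have e2 := hK n x y
      rw [hdisj n m y (Ne.symm hmn) hy, sub_zero] at e1
      rw [hdisj m n x hmn hx, zero_sub, norm_neg] at e2
      linarith [norm_sub_le (f m x) (f n y)]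
  · intro x
    by_cases hx : ∀ n ∈ A, f n x = 0
    · rw [h0 x hx, norm_zero]; exact hC0
    · push Not at hx
      obtain ⟨n, hn, hx⟩ := hx
      rw [h1 n hn x hx]; exact hC n x

/-! ### Composition with Lipschitz functions detects Lipschitz maps -/

/-- The Lipschitz functions on `X` with their difference quotients, as a subspace of a product of
two `ℓ^∞` spaces; the values of the second component on the diagonal are arbitrary. -/
noncomputable def lipGraph (X : Type*) [PseudoMetricSpace X] :
    Submodule ℝ (lp (fun _ : X => ℝ) ⊤ × lp (fun _ : X × X => ℝ) ⊤) where
  carrier := {F | ∀ p : X × X, F.1 p.1 - F.1 p.2 = dist p.1 p.2 * F.2 p}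
  add_mem' {F G} hF hG p := by
    have h1 := hF p
    have h2 := hG p
    simp only [Prod.fst_add, Prod.snd_add, lp.coeFn_add, Pi.add_apply]
    linear_combination h1 + h2
  zero_mem' p := by simp
  smul_mem' c F hF p := by
    have h1 := hF p
    simp only [Prod.smul_fst, Prod.smul_snd, lp.coeFn_smul, Pi.smul_apply, smul_eq_mul]
    linear_combination c * h1

theorem isClosed_lipGraph (X : Type*) [PseudoMetricSpace X] :
    IsClosed (lipGraph X : Set (lp (fun _ : X => ℝ) ⊤ × lp (fun _ : X × X => ℝ) ⊤)) := by
  have : (lipGraph X : Set (lp (fun _ : X => ℝ) ⊤ × lp (fun _ : X × X => ℝ) ⊤)) =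
      ⋂ p : X × X, {F | F.1 p.1 - F.1 p.2 = dist p.1 p.2 * F.2 p} := by
    ext F; simp only [Set.mem_iInter]; rfl
  rw [this]
  have c1 : ∀ x : X, Continuous fun F : lp (fun _ : X => ℝ) ⊤ × lp (fun _ : X × X => ℝ) ⊤ =>
      F.1 x := fun x => (lp.evalCLM ℝ (fun _ : X => ℝ) ⊤ x).continuous.comp continuous_fst
  have c2 : ∀ p : X × X, Continuous fun F : lp (fun _ : X => ℝ) ⊤ × lp (fun _ : X × X => ℝ) ⊤ =>
      F.2 p := fun p => (lp.evalCLM ℝ (fun _ : X × X => ℝ) ⊤ p).continuous.comp continuous_snd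
  exact isClosed_iInter fun p =>
    isClosed_eq ((c1 p.1).sub (c1 p.2)) (continuous_const.mul (c2 p))

/-- The uniform boundedness principle, applied to the functionals
`f ↦ (f (h y) - f (h y')) / dist y y'` and tested on the functions `dist · (h y')`. -/
theorem exists_lipschitzWith_of_comp {X Y : Type*} [PseudoMetricSpace X] [MetricSpace Y]
    (hXb : IsBounded (univ : Set X)) (h : Y → X)
    (hcomp : ∀ f : X → ℝ, IsLip f → ∃ K : ℝ≥0, LipschitzWith K (f ∘ h)) :
    ∃ K : ℝ≥0, LipschitzWith K h := by
  have : CompleteSpace (lipGraph X) := (isClosed_lipGraph X).completeSpace_coe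
  let ev : X → lipGraph X →L[ℝ] ℝ := fun x =>
    (lp.evalCLM ℝ (fun _ : X => ℝ) ⊤ x).comp
      ((ContinuousLinearMap.fst ℝ _ _).comp (lipGraph X).subtypeL)
  have hev : ∀ x F, ev x F = F.1.1 x := fun _ _ => rfl
  let g : Y × Y → lipGraph X →L[ℝ] ℝ := fun q =>
    (dist q.1 q.2)⁻¹ • (ev (h q.1) - ev (h q.2))
  have hg : ∀ q F, g q F = (dist q.1 q.2)⁻¹ * (F.1.1 (h q.1) - F.1.1 (h q.2)) := fun _ _ => rfl
  obtain ⟨C, hC⟩ : ∃ C, ∀ q, ‖g q‖ ≤ C := by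
    refine banach_steinhaus fun F => ?_
    have hF : IsLip (F.1.1 : X → ℝ) := by
      refine isLip_of_norm_sub_le (K := ‖F.1.2‖) (C := ‖F.1.1‖) (fun x y => ?_) fun x =>
        lp.norm_apply_le_norm (by simp) F.1.1 x
      have hxy := F.2 (x, y)
      simp only at hxy
      rw [hxy, norm_mul, Real.norm_of_nonneg dist_nonneg, mul_comm]
      gcongr
      exact lp.norm_apply_le_norm (by simp) F.1.2 (x, y)
    obtain ⟨K, hK⟩ := hcomp _ hF
    refine ⟨K, fun q => ?_⟩
    have h1 := hK.dist_le_mul q.1 q.2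
    rw [hg, norm_mul, norm_inv, Real.norm_of_nonneg dist_nonneg, ← dist_eq_norm]
    exact inv_mul_le_of_le_mul₀ dist_nonneg K.2 (by rw [mul_comm]; exact h1)
  obtain ⟨D, hD⟩ := Metric.isBounded_iff.1 hXb
  refine ⟨(C * max D 1).toNNReal, LipschitzWith.of_dist_le' fun y y' => ?_⟩
  have hD0 : 0 ≤ D := dist_nonneg.trans (hD (mem_univ (h y)) (mem_univ (h y)))
  have b1 : ∀ x, ‖dist x (h y')‖ ≤ D := fun x => by
    rw [Real.norm_of_nonneg dist_nonneg]; exact hD (mem_univ _) (mem_univ _)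
  have b2 : ∀ p : X × X, ‖(dist p.1 (h y') - dist p.2 (h y')) / dist p.1 p.2‖ ≤ 1 := fun p => by
    rw [norm_div, Real.norm_of_nonneg (dist_nonneg (x := p.1) (y := p.2)), Real.norm_eq_abs]
    exact div_le_one_of_le₀ (abs_dist_sub_le _ _ _) dist_nonneg
  let F1 : lp (fun _ : X => ℝ) ⊤ := ⟨fun x => dist x (h y'),
    memℓp_infty ⟨D, by rintro _ ⟨x, rfl⟩; exact b1 x⟩⟩
  let F2 : lp (fun _ : X × X => ℝ) ⊤ :=
    ⟨fun p => (dist p.1 (h y') - dist p.2 (h y')) / dist p.1 p.2,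
    memℓp_infty ⟨1, by rintro _ ⟨x, rfl⟩; exact b2 x⟩⟩
  let F : lipGraph X := ⟨(F1, F2), fun p => by
    change dist p.1 (h y') - dist p.2 (h y') =
      dist p.1 p.2 * ((dist p.1 (h y') - dist p.2 (h y')) / dist p.1 p.2)
    by_cases hp : dist p.1 p.2 = 0
    · have h1 := abs_dist_sub_le p.1 p.2 (h y')
      rw [hp] at h1 ⊢
      rw [zero_mul]; exact abs_nonpos_iff.1 h1
    · field_simp⟩
  have hF : ‖F‖ ≤ max D 1 := by
    change max ‖F1‖ ‖F2‖ ≤ _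
    exact max_le_max (lp.norm_le_of_forall_le hD0 b1) (lp.norm_le_of_forall_le zero_le_one b2)
  have h1 : ‖g (y, y') F‖ ≤ C * max D 1 :=
    ((g (y, y')).le_opNorm F).trans
      (mul_le_mul (hC _) hF (norm_nonneg _) ((g (y, y')).opNorm_nonneg.trans (hC (y, y'))))
  have h2 : g (y, y') F = (dist y y')⁻¹ * dist (h y) (h y') := by
    rw [hg]; change _ * (dist (h y) (h y') - dist (h y') (h y')) = _
    rw [dist_self, sub_zero]
  rcases eq_or_ne y y' with rfl | hne
  · simp
  rw [h2, norm_mul, norm_inv, Real.norm_of_nonneg dist_nonneg, Real.norm_of_nonneg dist_nonneg] at h1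
  rw [inv_mul_le_iff₀ (dist_pos.2 hne)] at h1
  linarith

/-! ### Separating bijections -/

/-- `T` restricts to a linear separating bijection between the spaces of bounded Lipschitz
functions; its values on other functions are irrelevant. -/
structure IsSepBij (𝕂 : Type*) {X Y : Type*} [RCLike 𝕂] [PseudoMetricSpace X]
    [PseudoMetricSpace Y] (T : (X → 𝕂) → (Y → 𝕂)) : Prop where
  maps_lip : ∀ f, IsLip f → IsLip (T f)
  map_add : ∀ f g, IsLip f → IsLip g → T (f + g) = T f + T g
  map_smul : ∀ (c : 𝕂) (f : X → 𝕂), IsLip f → T (c • f) = c • T f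
  inj : ∀ f g, IsLip f → IsLip g → T f = T g → f = g
  surj : ∀ g, IsLip g → ∃ f, IsLip f ∧ T f = g
  sep : ∀ f g, IsLip f → IsLip g → coz f ∩ coz g = ∅ → coz (T f) ∩ coz (T g) = ∅

namespace IsSepBij

variable {𝕂 X Y : Type*} [RCLike 𝕂] [MetricSpace X] [MetricSpace Y] {T : (X → 𝕂) → (Y → 𝕂)}

theorem map_sub (hT : IsSepBij 𝕂 T) {f g : X → 𝕂} (hf : IsLip f) (hg : IsLip g) :
    T (f - g) = T f - T g := by
  have := hT.map_add f ((-1 : 𝕂) • g) hf (hg.smul _)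
  rwa [hT.map_smul _ g hg, neg_one_smul, neg_one_smul, ← sub_eq_add_neg, ← sub_eq_add_neg] at this

theorem map_zero (hT : IsSepBij 𝕂 T) : T 0 = 0 := by
  have := hT.map_smul 0 0 (isLip_const 0)
  rwa [zero_smul, zero_smul] at this

theorem eq_zero_of_disjoint (hT : IsSepBij 𝕂 T) {f g : X → 𝕂} (hf : IsLip f) (hg : IsLip g)
    (hfg : ∀ x, g x ≠ 0 → f x = 0) {y : Y} (hy : T g y ≠ 0) : T f y = 0 := by
  by_contra hne
  have h0 : coz f ∩ coz g = ∅ := by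
    ext x
    simp only [mem_inter_iff, mem_empty_iff_false, iff_false, not_and]
    exact fun h1 h2 => h1 (hfg x h2)
  have := hT.sep f g hf hg h0
  exact (Set.eq_empty_iff_forall_notMem.1 this y) ⟨hne, hy⟩

/-- If `f` and `f'` agree where `g` does not vanish, then so do their images at the points where
`T g` does not vanish. -/
theorem eq_of_eqOn (hT : IsSepBij 𝕂 T) {f f' g : X → 𝕂} (hf : IsLip f) (hf' : IsLip f')
    (hg : IsLip g) (hfg : ∀ x, g x ≠ 0 → f x = f' x) {y : Y} (hy : T g y ≠ 0) :
    T f y = T f' y := by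
  have := hT.eq_zero_of_disjoint (hf.sub hf') hg (fun x hx => sub_eq_zero.2 (hfg x hx)) hy
  rw [hT.map_sub hf hf'] at this
  exact sub_eq_zero.1 this

/-- The oscillation argument: disjointly supported functions `f n` with uniform bounds cannot
have images whose values at the points of a convergent sequence `y n` approach a nonzero limit.
Otherwise, the sum of the `f n` over even `n` would have an image close to that limit at `y n` for
even `n`, but equal to `0` at `y n` for odd `n`. -/
theorem oscillation (hT : IsSepBij 𝕂 T) {f : ℕ → X → 𝕂} {K C : ℝ}
    (hK0 : 0 ≤ K) (hC0 : 0 ≤ C)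
    (hK : ∀ n x y, ‖f n x - f n y‖ ≤ K * dist x y) (hC : ∀ n x, ‖f n x‖ ≤ C)
    (hdisj : ∀ m n x, m ≠ n → f m x ≠ 0 → f n x = 0)
    {y : ℕ → Y} {y₀ : Y} (hy : Filter.Tendsto y Filter.atTop (nhds y₀)) {c : 𝕂} (hc : c ≠ 0)
    (hlim : Filter.Tendsto (fun n => T (f n) (y n)) Filter.atTop (nhds c)) : False := by
  obtain ⟨F, hF, hF1, hF0⟩ := exists_glue hK0 hC0 hK hC hdisj {n | Even n}
  have hf : ∀ n, IsLip (f n) := fun n => isLip_of_norm_sub_le (hK n) (hC n)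
  have hTF : Filter.Tendsto (fun n => T F (y n)) Filter.atTop (nhds (T F y₀)) :=
    ((hT.maps_lip F hF).continuous.tendsto y₀).comp hy
  have hne : ∀ᶠ n in Filter.atTop, T (f n) (y n) ≠ 0 := hlim.eventually_ne hc
  have t1 : Filter.Tendsto (fun n : ℕ => 2 * n) Filter.atTop Filter.atTop :=
    Filter.tendsto_atTop_mono (fun n => by change n ≤ 2 * n; omega) Filter.tendsto_id
  have t2 : Filter.Tendsto (fun n : ℕ => 2 * n + 1) Filter.atTop Filter.atTop :=
    Filter.tendsto_atTop_mono (fun n => by change n ≤ 2 * n + 1; omega) Filter.tendsto_id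
  have e1 : T F y₀ = c := by
    refine tendsto_nhds_unique (hTF.comp t1) ((hlim.comp t1).congr' ?_)
    filter_upwards [t1.eventually hne] with n hn
    exact (hT.eq_of_eqOn hF (hf _) (hf _) (fun x hx => hF1 _ (even_two_mul n) x hx) hn).symm
  have e2 : T F y₀ = 0 := by
    refine tendsto_nhds_unique (hTF.comp t2) (tendsto_const_nhds.congr' ?_)
    filter_upwards [t2.eventually hne] with n hn
    refine (hT.eq_zero_of_disjoint hF (hf _) (fun x hx => hF0 x fun m hm => ?_) hn).symm
    refine hdisj (2 * n + 1) m x (fun e => ?_) hx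
    rw [← e] at hm
    exact (Nat.not_even_two_mul_add_one n) hm
  exact hc (e1.symm.trans e2)

theorem exists_map_ne_zero (hT : IsSepBij 𝕂 T) (c : X) {r : ℝ} (hr : 0 < r) :
    ∃ y, T (plateau 𝕂 c r) y ≠ 0 := by
  by_contra! h
  have h0 : T (plateau 𝕂 c r) = T 0 := by rw [hT.map_zero]; exact funext h
  have := congrFun (hT.inj _ _ (isLip_plateau c hr) (isLip_const 0) h0) c
  rw [plateau_eq_one hr (by rw [dist_self]; exact hr.le)] at this
  exact one_ne_zero this

/-- If `X` had an infinite uniformly separated sequence, cutting off the preimage of the constant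
function `1` near its points would give functions contradicting `oscillation`. -/
theorem compactSpace [CompleteSpace X] [CompactSpace Y] (hT : IsSepBij 𝕂 T) : CompactSpace X := by
  refine ⟨isCompact_iff_totallyBounded_isComplete.2 ⟨?_, isComplete_univ⟩⟩
  by_contra htb
  rw [Metric.totallyBounded_iff] at htb
  push Not at htb
  obtain ⟨ε, hε, htb⟩ := htb
  obtain ⟨x, -, hx⟩ := exists_seq_of_forall_finset_exists (fun _ : X => True)
    (fun a b => ε ≤ dist b a) (fun s _ => by
      obtain ⟨b, -, hb⟩ := Set.not_subset.1 (htb s s.finite_toSet)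
      refine ⟨b, trivial, fun a ha => ?_⟩
      by_contra! hlt
      exact hb (mem_iUnion₂.2 ⟨a, ha, hlt⟩))
  have hsep : ∀ m n, m ≠ n → ε ≤ dist (x m) (x n) := by
    intro m n hmn
    rcases lt_or_gt_of_ne hmn with h | h
    · rw [dist_comm]; exact hx m n h
    · exact hx n m h
  obtain ⟨u, hu, hTu⟩ := hT.surj (fun _ => 1) (isLip_const 1)
  have hr : 0 < ε / 8 := by positivity
  have hr' : 0 < ε / 4 := by positivity
  choose y hy using fun n => hT.exists_map_ne_zero (x n) hr
  obtain ⟨y₀, φ, hφ, hlim⟩ := CompactSpace.tendsto_subseq y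
  obtain ⟨K, C, hK0, hC0, hK, hC⟩ := hu.exists_bounds
  refine hT.oscillation (f := fun n z => u z * plateau 𝕂 (x (φ n)) (ε / 4) z)
    (K := C * (1 / (ε / 4)) + K) (C := C) (by positivity) hC0 (fun n a b => ?_) (fun n a => ?_)
    (fun m n a hmn ha => ?_) hlim one_ne_zero (tendsto_const_nhds.congr fun n => ?_)
  · calc _ = ‖u a * (plateau 𝕂 (x (φ n)) (ε / 4) a - plateau 𝕂 (x (φ n)) (ε / 4) b)
          + (u a - u b) * plateau 𝕂 (x (φ n)) (ε / 4) b‖ := by congr 1; ring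
      _ ≤ ‖u a‖ * ‖plateau 𝕂 (x (φ n)) (ε / 4) a - plateau 𝕂 (x (φ n)) (ε / 4) b‖
          + ‖u a - u b‖ * ‖plateau 𝕂 (x (φ n)) (ε / 4) b‖ := by
        rw [← norm_mul, ← norm_mul]; exact norm_add_le _ _
      _ ≤ C * (1 / (ε / 4) * dist a b) + K * dist a b * 1 := by
        gcongr
        exacts [hC a, norm_plateau_sub_le _ hr' a b, hK a b, norm_plateau_le _ _ b]
      _ = _ := by ring
  · rw [norm_mul]
    calc _ ≤ C * 1 := mul_le_mul (hC a) (norm_plateau_le _ _ a) (norm_nonneg _) hC0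
      _ = C := mul_one C
  · have hma : dist a (x (φ m)) < 2 * (ε / 4) := by
      by_contra! hle
      exact ha (by rw [plateau_eq_zero hr' hle, mul_zero])
    rw [plateau_eq_zero hr', mul_zero]
    have h1 := hsep _ _ (hφ.injective.ne hmn)
    have h2 := dist_triangle_left (x (φ m)) (x (φ n)) a
    linarith
  · have e := hT.eq_of_eqOn hu (hu.mul (isLip_plateau (x (φ n)) hr'))
      (isLip_plateau (x (φ n)) hr) (fun z hz => ?_) (hy (φ n))
    · rw [hTu] at e; exact e
    · have hlt : dist z (x (φ n)) ≤ ε / 4 := by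
        by_contra! hlt
        exact hz (plateau_eq_zero hr (by linarith))
      rw [Pi.mul_apply, plateau_eq_one hr' hlt, mul_one]

/-- Every `y` has a support point: a point `x` such that functions supported arbitrarily close to
`x` have images that do not vanish at `y`. Otherwise compactness allows one to cut a preimage of
`1` down to `0` in finitely many steps, none of which changes the value of the image at `y`. -/
theorem exists_support [CompactSpace X] (hT : IsSepBij 𝕂 T) (y : Y) :
    ∃ x : X, ∀ r > 0, ∃ f, IsLip f ∧ (∀ z, r ≤ dist z x → f z = 0) ∧ T f y ≠ 0 := by
  by_contra! hno
  have key : ∀ v : X → 𝕂, IsLip v → ∃ w : X → 𝕂, IsLip w ∧ T w y = T v y ∧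
      (∀ z ∈ (univ : Set X), w z = 0) ∧ ∀ z, v z = 0 → w z = 0 := by
    refine isCompact_univ.induction_on (p := fun s => ∀ v : X → 𝕂, IsLip v → ∃ w : X → 𝕂,
      IsLip w ∧ T w y = T v y ∧ (∀ z ∈ s, w z = 0) ∧ ∀ z, v z = 0 → w z = 0) ?_ ?_ ?_ ?_
    · exact fun v hv => ⟨v, hv, rfl, fun z hz => hz.elim, fun z hz => hz⟩
    · intro s t hst ht v hv
      obtain ⟨w, h1, h2, h3, h4⟩ := ht v hv
      exact ⟨w, h1, h2, fun z hz => h3 z (hst hz), h4⟩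
    · intro s t hs ht v hv
      obtain ⟨w, h1, h2, h3, h4⟩ := hs v hv
      obtain ⟨w', h1', h2', h3', h4'⟩ := ht w h1
      refine ⟨w', h1', h2'.trans h2, ?_, fun z hz => h4' z (h4 z hz)⟩
      rintro z (hz | hz)
      · exact h4' z (h3 z hz)
      · exact h3' z hz
    · intro x _
      obtain ⟨r, hr, h⟩ := hno x
      have hr2 : 0 < r / 2 := half_pos hr
      refine ⟨closedBall x (r / 2), mem_nhdsWithin_of_mem_nhds (closedBall_mem_nhds x hr2), ?_⟩
      intro v hv
      have hp : IsLip (v * plateau 𝕂 x (r / 2)) := hv.mul (isLip_plateau x hr2)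
      refine ⟨v - v * plateau 𝕂 x (r / 2), hv.sub hp, ?_, fun z hz => ?_, fun z hz => ?_⟩
      · rw [hT.map_sub hv hp, Pi.sub_apply, h _ hp, sub_zero]
        intro z hz
        rw [Pi.mul_apply, plateau_eq_zero hr2 (by linarith), mul_zero]
      · rw [Pi.sub_apply, Pi.mul_apply, plateau_eq_one hr2 hz, mul_one, sub_self]
      · rw [Pi.sub_apply, Pi.mul_apply, hz, zero_mul, sub_self]
  obtain ⟨u, hu, hTu⟩ := hT.surj (fun _ => 1) (isLip_const 1)
  obtain ⟨w, -, h2, h3, -⟩ := key u hu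
  rw [show w = 0 from funext fun z => h3 z trivial, hT.map_zero, hTu] at h2
  exact zero_ne_one h2

/-- `h` assigns to every `y` a support point of `f ↦ T f y`. -/
def IsSupportMap (T : (X → 𝕂) → (Y → 𝕂)) (h : Y → X) : Prop :=
  ∀ y, ∀ r > 0, ∃ f, IsLip f ∧ (∀ z, r ≤ dist z (h y) → f z = 0) ∧ T f y ≠ 0

variable {h : Y → X}

theorem eq_zero_of_near (hT : IsSepBij 𝕂 T) (hh : IsSupportMap T h) {f : X → 𝕂} (hf : IsLip f)
    {y : Y} {r : ℝ} (hr : 0 < r) (hz : ∀ z, dist z (h y) < r → f z = 0) : T f y = 0 := by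
  obtain ⟨g, hg, hg0, hgy⟩ := hh y r hr
  refine hT.eq_zero_of_disjoint hf hg (fun x hx => hz x ?_) hgy
  by_contra! hle
  exact hx (hg0 x hle)

/-- A support point lies in the closure of the cozero set of any function whose image does not
vanish at `y`. -/
theorem dist_le_of_ne_zero (hT : IsSepBij 𝕂 T) (hh : IsSupportMap T h) {f : X → 𝕂}
    (hf : IsLip f) {c : X} {r : ℝ} (hz : ∀ z, r ≤ dist z c → f z = 0) {y : Y} (hy : T f y ≠ 0) :
    dist (h y) c ≤ r := by
  by_contra! hlt
  refine hy (hT.eq_zero_of_near hh hf (sub_pos.2 hlt) fun z hzz => hz z ?_)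
  have := dist_triangle_left (h y) c z
  linarith

theorem continuous_support (hT : IsSepBij 𝕂 T) (hh : IsSupportMap T h) : Continuous h := by
  refine Metric.continuous_iff'.2 fun y ε hε => ?_
  obtain ⟨f, hf, hf0, hfy⟩ := hh y (ε / 2) (half_pos hε)
  have := (hT.maps_lip f hf).continuous.continuousAt.eventually_ne hfy
  filter_upwards [this] with y' hy'
  exact (hT.dist_le_of_ne_zero hh hf hf0 hy').trans_lt (half_lt_self hε)

theorem surjective_support [CompactSpace Y] (hT : IsSepBij 𝕂 T) (hh : IsSupportMap T h) :
    Surjective h := by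
  have hcl : IsClosed (range h) := (isCompact_range (hT.continuous_support hh)).isClosed
  have hd : DenseRange h := by
    refine Metric.denseRange_iff.2 fun x r hr => ?_
    have hr4 : 0 < r / 4 := by positivity
    obtain ⟨y, hy⟩ := hT.exists_map_ne_zero x hr4
    refine ⟨y, ?_⟩
    have := hT.dist_le_of_ne_zero hh (isLip_plateau x hr4) (fun z hz => plateau_eq_zero hr4 hz) hy
    rw [dist_comm]
    linarith
  rw [← range_eq_univ, ← hcl.closure_eq]
  exact hd.closure_range

/-- The points at which `T` is a weighted evaluation at the support point. At other points the
functional `f ↦ T f y` sees more of `f` than its value at `h y`, as a generalized derivative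
does. -/
def goodSet (T : (X → 𝕂) → (Y → 𝕂)) (h : Y → X) : Set Y :=
  {y | ∀ f, IsLip f → T f y = T (fun _ => 1) y * f (h y)}

theorem isClosed_goodSet (hT : IsSepBij 𝕂 T) (hh : IsSupportMap T h) :
    IsClosed (goodSet T h) := by
  have : goodSet T h = ⋂ f : {f : X → 𝕂 // IsLip f},
      {y | T f.1 y = T (fun _ => 1) y * f.1 (h y)} := by
    ext y; simp [goodSet]
  rw [this]
  exact isClosed_iInter fun f => isClosed_eq (hT.maps_lip _ f.2).continuous
    ((hT.maps_lip _ (isLip_const 1)).continuous.mul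
      (f.2.continuous.comp (hT.continuous_support hh)))

theorem map_const (hT : IsSepBij 𝕂 T) (c : 𝕂) (y : Y) :
    T (fun _ => c) y = c * T (fun _ => 1) y := by
  have := congrFun (hT.map_smul c (fun _ => 1) (isLip_const 1)) y
  rw [Pi.smul_apply, smul_eq_mul] at this
  rw [← this]
  congr 2
  ext; simp

/-- Points over an isolated point are good, since a function vanishing at an isolated point
vanishes near it. -/
theorem mem_goodSet_of_isolated (hT : IsSepBij 𝕂 T) (hh : IsSupportMap T h) {y : Y} {r : ℝ}
    (hr : 0 < r) (hiso : ∀ x, dist x (h y) < r → x = h y) : y ∈ goodSet T h := by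
  intro f hf
  have hc : IsLip (fun _ : X => f (h y)) := isLip_const _
  have := hT.eq_zero_of_near hh (hf.sub hc) hr fun z hz => by
    rw [hiso z hz, Pi.sub_apply, sub_self]
  rw [hT.map_sub hf hc, Pi.sub_apply, sub_eq_zero, hT.map_const] at this
  rw [this, mul_comm]

/-- If no good point lies over `x₀`, then `x₀` is the limit of a sequence `x n`, rapidly
approaching it, of other points. With `y n` over `x n` converging to a point `y₀` over `x₀`, and `f`
witnessing that `y₀` is not good, the functions `f - f (x n)` cut off on disjoint balls about `x n`
contradict `oscillation`: these cut-offs are uniformly Lipschitz, and the values at `y n` of their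
images tend to `T f y₀ - f x₀ * T 1 y₀ ≠ 0`. -/
theorem exists_mem_goodSet [CompactSpace Y] (hT : IsSepBij 𝕂 T) (hh : IsSupportMap T h) (x₀ : X) :
    ∃ y ∈ goodSet T h, h y = x₀ := by
  by_contra! hbad
  have hcont := hT.continuous_support hh
  have hsurj := hT.surjective_support hh
  have hacc : ∀ r > 0, ∃ x, x ≠ x₀ ∧ dist x x₀ < r := by
    by_contra! hiso
    obtain ⟨r, hr, hiso⟩ := hiso
    obtain ⟨y, rfl⟩ := hsurj x₀
    refine hbad y (hT.mem_goodSet_of_isolated hh hr fun x hx => ?_) rfl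
    by_contra hne
    exact absurd hx (not_lt.2 (hiso x hne))
  obtain ⟨x, hx0, hx⟩ := exists_seq_of_forall_finset_exists (fun x : X => x ≠ x₀)
    (fun a b => 4 * dist b x₀ < dist a x₀) (fun s hs => by
      have hpos : ∃ δ > 0, ∀ a ∈ s, δ ≤ dist a x₀ := by
        rcases s.eq_empty_or_nonempty with rfl | hne
        · exact ⟨1, one_pos, by simp⟩
        · obtain ⟨a, ha, hmin⟩ := s.exists_min_image (fun a => dist a x₀) hne
          exact ⟨dist a x₀, dist_pos.2 (hs a ha), hmin⟩
      obtain ⟨δ, hδ, hle⟩ := hpos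
      obtain ⟨b, hb, hlt⟩ := hacc (δ / 4) (by positivity)
      exact ⟨b, hb, fun a ha => by linarith [hle a ha]⟩)
  choose y' hy' using fun n => hsurj (x n)
  obtain ⟨y₀, φ, hφ, hlim⟩ := CompactSpace.tendsto_subseq y'
  have hxlim : Filter.Tendsto (fun n => x (φ n)) Filter.atTop (nhds (h y₀)) :=
    ((hcont.tendsto y₀).comp hlim).congr fun n => hy' (φ n)
  -- The limit `d` of `dist (x (φ n)) x₀` satisfies `4 * d ≤ d`.
  have hy₀ : h y₀ = x₀ := by
    have hd : Filter.Tendsto (fun n => dist (x (φ n)) x₀) Filter.atTop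
        (nhds (dist (h y₀) x₀)) := hxlim.dist tendsto_const_nhds
    have h4 := le_of_tendsto_of_tendsto' ((hd.comp (Filter.tendsto_add_atTop_nat 1)).const_mul 4)
      hd (fun n => (hx _ _ (hφ (Nat.lt_succ_self n))).le)
    exact dist_le_zero.1 (by linarith)
  have hy₀bad : y₀ ∉ goodSet T h := fun hmem => hbad y₀ hmem hy₀
  simp only [goodSet, mem_ofPred_eq, not_forall] at hy₀bad
  obtain ⟨f, hf, hne⟩ := hy₀bad
  obtain ⟨K, C, hK0, hC0, hK, hC⟩ := hf.exists_bounds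
  let r : ℕ → ℝ := fun n => dist (x (φ n)) x₀ / 4
  have hr : ∀ n, 0 < r n := fun n => div_pos (dist_pos.2 (hx0 _)) (by norm_num)
  let g : ℕ → X → 𝕂 := fun n => f - fun _ => f (x (φ n))
  have hg : ∀ n, IsLip (g n) := fun n => hf.sub (isLip_const _)
  have hgK : ∀ n a b, ‖g n a - g n b‖
      ≤ K * dist a b := fun n a b => by
    simpa [g] using hK a b
  have hdisj : ∀ m n a, m < n → dist a (x (φ m)) < 2 * r m → dist a (x (φ n)) < 2 * r n →
      False := by
    intro m n a hmn h1 h2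
    have h3 := hx _ _ (hφ hmn)
    have h4 := dist_triangle_left (x (φ m)) x₀ a
    have h5 := dist_triangle a (x (φ n)) x₀
    have h6 : 0 < dist (x (φ m)) x₀ := dist_pos.2 (hx0 _)
    simp only [r] at h1 h2
    linarith
  refine hT.oscillation
    (f := fun n z => g n z * plateau 𝕂 (x (φ n)) (r n) z)
    (K := 3 * K) (C := C + C) (by positivity) (by positivity)
    (fun n a b => norm_mul_plateau_sub_le hK0 (hgK n) (by simp [g]) (hr n) a b)
    (fun n a => ?_) (fun m n a hmn ha => ?_) hlim (sub_ne_zero.2 hne) ?_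
  · rw [norm_mul]
    calc _ ≤ (C + C) * 1 := by
          refine mul_le_mul ?_ (norm_plateau_le _ _ a) (norm_nonneg _) (by positivity)
          exact (norm_sub_le _ _).trans (add_le_add (hC _) (hC _))
      _ = _ := mul_one _
  · have h1 : dist a (x (φ m)) < 2 * r m := by
      by_contra! hle
      exact ha (by rw [plateau_eq_zero (hr m) hle, mul_zero])
    by_cases h2 : dist a (x (φ n)) < 2 * r n
    · rcases lt_or_gt_of_ne hmn with hlt | hlt
      · exact (hdisj m n a hlt h1 h2).elim
      · exact (hdisj n m a hlt h2 h1).elim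
    · rw [plateau_eq_zero (hr n) (not_lt.1 h2), mul_zero]
  · have e : ∀ n, T f (y' (φ n)) - T (fun _ => 1) (y' (φ n)) * f (x (φ n)) =
        T (fun z => g n z * plateau 𝕂 (x (φ n)) (r n) z) (y' (φ n)) := by
      intro n
      have hp : IsLip (g n * plateau 𝕂 (x (φ n)) (r n)) :=
        (hg n).mul (isLip_plateau _ (hr n))
      have h0 := hT.eq_zero_of_near hh (y := y' (φ n)) ((hg n).sub hp) (hr n) fun z hz => by
        rw [hy'] at hz
        rw [Pi.sub_apply, Pi.mul_apply, plateau_eq_one (hr n) hz.le, mul_one, sub_self]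
      rw [hT.map_sub (hg n) hp, Pi.sub_apply, hT.map_sub hf (isLip_const _), Pi.sub_apply,
        hT.map_const, sub_eq_zero, mul_comm (f _)] at h0
      exact h0
    refine Filter.Tendsto.congr e (Filter.Tendsto.sub ?_ (Filter.Tendsto.mul ?_ ?_))
    · exact ((hT.maps_lip f hf).continuous.tendsto y₀).comp hlim
    · exact ((hT.maps_lip _ (isLip_const 1)).continuous.tendsto y₀).comp hlim
    · exact (hf.continuous.tendsto (h y₀)).comp hxlim

theorem weight_ne_zero (hT : IsSepBij 𝕂 T) {y : Y} (hy : y ∈ goodSet T h) :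
    T (fun _ => 1) y ≠ 0 := by
  intro h0
  obtain ⟨u, hu, hTu⟩ := hT.surj (fun _ => 1) (isLip_const 1)
  have := hy u hu
  rw [hTu, h0, zero_mul] at this
  exact one_ne_zero this

/-- A function whose image vanishes on the good set is zero, because the good set lies over all of
`X`. As the good set is closed and `T` is onto, it has to be all of `Y`. -/
theorem goodSet_eq_univ [CompactSpace Y] (hT : IsSepBij 𝕂 T) (hh : IsSupportMap T h) (y : Y) :
    y ∈ goodSet T h := by
  by_contra hy
  obtain ⟨ε, hε, hball⟩ := Metric.isOpen_iff.1 (hT.isClosed_goodSet hh).isOpen_compl y hy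
  have hε2 : 0 < ε / 2 := half_pos hε
  obtain ⟨f, hf, hTf⟩ := hT.surj _ (isLip_plateau (𝕂 := 𝕂) y hε2)
  have hf0 : f = 0 := by
    ext x
    obtain ⟨z, hz, rfl⟩ := hT.exists_mem_goodSet hh x
    have h1 := hz f hf
    rw [hTf, plateau_eq_zero hε2] at h1
    · exact (mul_eq_zero.1 h1.symm).resolve_left (hT.weight_ne_zero hz)
    · by_contra! hlt
      exact hball (mem_ball.2 (by linarith)) hz
  have h1 := congrFun hTf y
  rw [hf0, hT.map_zero, plateau_eq_one hε2 (by rw [dist_self]; exact hε2.le)] at h1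
  exact zero_ne_one h1

end IsSepBij

/-! ### The representation -/

/-- A bijective linear separating map `T : Lip(X) → Lip(Y)` with `Y` compact
is a weighted composition map `(T f) y = τ y * f (h y)` for a bi-Lipschitz homeomorphism
`h : Y → X` and a nonvanishing `τ ∈ Lip(Y)`. -/
theorem separating_bijective_scalar_representation
    {𝕂 X Y : Type*} [RCLike 𝕂]
    [MetricSpace X] [CompleteSpace X] [MetricSpace Y] [CompleteSpace Y] [CompactSpace Y]
    (hXb : IsBounded (univ : Set X)) (hYb : IsBounded (univ : Set Y))
    (T : (X → 𝕂) → (Y → 𝕂))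
    (hmaps : ∀ f, IsLip f → IsLip (T f))
    (hadd : ∀ f g, IsLip f → IsLip g → T (f + g) = T f + T g)
    (hsmul : ∀ (c : 𝕂) (f : X → 𝕂), IsLip f → T (c • f) = c • T f)
    (hinj : ∀ f g, IsLip f → IsLip g → T f = T g → f = g)
    (hsurj : ∀ g, IsLip g → ∃ f, IsLip f ∧ T f = g)
    (hsep : ∀ f g, IsLip f → IsLip g → coz f ∩ coz g = ∅ → coz (T f) ∩ coz (T g) = ∅) :
    ∃ (h : Y → X) (τ : Y → 𝕂),
      Bijective h ∧ (∃ K : ℝ≥0, LipschitzWith K h) ∧ (∃ K : ℝ≥0, AntilipschitzWith K h) ∧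
      IsLip τ ∧ (∀ y, τ y ≠ 0) ∧
      ∀ f, IsLip f → ∀ y, T f y = τ y * f (h y) := by
  have hT : IsSepBij 𝕂 T := ⟨hmaps, hadd, hsmul, hinj, hsurj, hsep⟩
  have : CompactSpace X := hT.compactSpace
  choose h hh' using hT.exists_support
  have hh : IsSepBij.IsSupportMap T h := hh'
  have hgood := hT.goodSet_eq_univ hh
  set τ : Y → 𝕂 := T fun _ => 1 with hτ
  have hτlip : IsLip τ := hT.maps_lip _ (isLip_const 1)
  have hτ0 : ∀ y, τ y ≠ 0 := fun y => hT.weight_ne_zero (hgood y)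
  have hrep : ∀ f, IsLip f → ∀ y, T f y = τ y * f (h y) := fun f hf y => hgood y f hf
  have hinjh : Injective h := by
    intro y₁ y₂ he
    by_contra hne
    have hd : 0 < dist y₂ y₁ / 2 := half_pos (dist_pos.2 (Ne.symm hne))
    obtain ⟨f, hf, hTf⟩ := hT.surj _ (isLip_plateau (𝕂 := 𝕂) y₁ hd)
    have h1 := hrep f hf y₁
    have h2 := hrep f hf y₂
    rw [hTf, plateau_eq_zero hd (by linarith)] at h2
    rw [hTf, plateau_eq_one hd (by rw [dist_self]; exact hd.le), he,
      (mul_eq_zero.1 h2.symm).resolve_left (hτ0 _), mul_zero] at h1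
    exact one_ne_zero h1
  have hbij : Bijective h := ⟨hinjh, hT.surjective_support hh⟩
  have hK1 : ∃ K : ℝ≥0, LipschitzWith K h := by
    refine exists_lipschitzWith_of_comp hXb h fun f hf => ?_
    -- `f ∘ h = τ⁻¹ * T f`
    obtain ⟨K, -, -, -, hK, -⟩ :=
      ((hτlip.inv hτ0).mul (hT.maps_lip _ (hf.ofReal 𝕂))).exists_bounds
    refine ⟨_, LipschitzWith.of_dist_le' (K := K) fun a b => ?_⟩
    have := hK a b
    simp only [Pi.mul_apply, hrep _ (hf.ofReal 𝕂), inv_mul_cancel_left₀ (hτ0 _)] at this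
    rwa [← RCLike.ofReal_sub, RCLike.norm_ofReal, ← Real.dist_eq] at this
  let e : Y ≃ X := Equiv.ofBijective h hbij
  have hK2 : ∃ K : ℝ≥0, LipschitzWith K e.symm := by
    refine exists_lipschitzWith_of_comp hYb e.symm fun g hg => ?_
    -- `g ∘ h⁻¹` is the preimage of `τ * g` under `T`.
    obtain ⟨f, hf, hTf⟩ := hT.surj _ (hτlip.mul (hg.ofReal 𝕂))
    obtain ⟨K, -, -, -, hK, -⟩ := hf.exists_bounds
    have hfg : ∀ x, f x = ((g (e.symm x) : ℝ) : 𝕂) := by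
      intro x
      have h1 := hrep f hf (e.symm x)
      rw [hTf, Pi.mul_apply, show h (e.symm x) = x from e.apply_symm_apply x] at h1
      exact (mul_left_cancel₀ (hτ0 _) h1).symm
    refine ⟨_, LipschitzWith.of_dist_le' (K := K) fun a b => ?_⟩
    have := hK a b
    rwa [hfg, hfg, ← RCLike.ofReal_sub, RCLike.norm_ofReal, ← Real.dist_eq] at this
  obtain ⟨K, hK⟩ := hK2
  exact ⟨h, τ, hbij, hK1, ⟨K, hK.to_rightInverse e.symm_apply_apply⟩, hτlip, hτ0, hrep⟩
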